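/- For every Λ > 0 there is a constant C > 0, depending only on φ and Λ, such that for every λ ∈ [0,Λ] and every Schwartz function u : ℝ² → ℂ satisfying Hu = λ²u: ‖u‖_{L^∞(ℝ²)} ≤ C ‖u‖_{L²(ℝ²)}. -/

import Mathlib

noncomputable section

open MeasureTheory Complex

abbrev R2 : Type := EuclideanSpace ℝ (Fin 2)

/-- Partial derivative of a complex-valued function in coordinate direction `j`. -/
def pdC (j : Fin 2) (f : R2 → ℂ) (x : R2) : ℂ :=
  fderiv ℝ f x (EuclideanSpace.single j 1)

/-- The operator `D_j = -i ∂_j` acting on complex-valued functions. -/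
def Dop (j : Fin 2) (f : R2 → ℂ) (x : R2) : ℂ := -Complex.I * pdC j f x

/-- Partial derivative of a real-valued function in coordinate direction `j`. -/
def pdR (j : Fin 2) (f : R2 → ℝ) (x : R2) : ℝ :=
  fderiv ℝ f x (EuclideanSpace.single j 1)

/-- The Laplacian of a real-valued function. -/
def lapR (f : R2 → ℝ) (x : R2) : ℝ := pdR 0 (pdR 0 f) x + pdR 1 (pdR 1 f) x

/-- `A u = (D₁/2 - (∂₂ φ)/2) u`. -/
def opA (φ : R2 → ℝ) (u : R2 → ℂ) (x : R2) : ℂ :=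
  Dop 0 u x / 2 - ((pdR 1 φ x / 2 : ℝ) : ℂ) * u x

/-- `B u = (D₂/2 + (∂₁ φ)/2) u`. -/
def opB (φ : R2 → ℝ) (u : R2 → ℂ) (x : R2) : ℂ :=
  Dop 1 u x / 2 + ((pdR 0 φ x / 2 : ℝ) : ℂ) * u x

/-- `P u = A²u + B²u - (Δφ/4) u - λ² u`. -/
def opP (φ : R2 → ℝ) (l : ℝ) (u : R2 → ℂ) (x : R2) : ℂ :=
  opA φ (opA φ u) x + opB φ (opB φ u) x - ((lapR φ x / 4 : ℝ) : ℂ) * u x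
    - ((l : ℂ)) ^ 2 * u x

/-- The magnetic Laplacian `H u = A²u + B²u - (Δφ/4) u`. -/
def opH (φ : R2 → ℝ) (u : R2 → ℂ) (x : R2) : ℂ :=
  opA φ (opA φ u) x + opB φ (opB φ u) x - ((lapR φ x / 4 : ℝ) : ℂ) * u x

def gau (y : R2) : ℝ := Real.exp (-(1/2) * ‖y‖ ^ 2)

lemma gau_int_b {b : ℝ} (hb : 0 < b) : Integrable (fun y : R2 => Real.exp (-b * ‖y‖ ^ 2)) := by
  have h := (GaussianFourier.integrable_cexp_neg_mul_sq_norm_add (V := R2) (b := (b : ℂ))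
    (by simpa using hb) 0 0).re
  refine h.congr (Filter.Eventually.of_forall fun y => ?_)
  simp only [zero_mul, add_zero]
  have : (-(b : ℂ) * (‖y‖ : ℂ) ^ 2) = ((-b * ‖y‖ ^ 2 : ℝ) : ℂ) := by push_cast; ring
  rw [this]
  exact Complex.exp_ofReal_re _

lemma gau_int : Integrable gau := gau_int_b (by norm_num : (0:ℝ) < 1/2)

lemma gau_pos (y : R2) : 0 < gau y := Real.exp_pos _

lemma gau_le_one (y : R2) : gau y ≤ 1 := by
  unfold gau
  rw [Real.exp_le_one_iff]
  nlinarith [sq_nonneg ‖y‖]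

lemma gau_cont : Continuous gau := by unfold gau; fun_prop

lemma gau_coord (j : Fin 2) (y : R2) : |y j| * gau y ≤ Real.exp (-(1/4) * ‖y‖ ^ 2) := by
  have h1 : |y j| ≤ ‖y‖ := PiLp.norm_apply_le y j
  have h2 : ‖y‖ ≤ Real.exp ((1/4) * ‖y‖ ^ 2) := by
    have := Real.add_one_le_exp ((1/4) * ‖y‖ ^ 2)
    nlinarith [sq_nonneg (‖y‖ / 2 - 1)]
  calc |y j| * gau y ≤ Real.exp ((1/4) * ‖y‖ ^ 2) * gau y :=
        mul_le_mul_of_nonneg_right (h1.trans h2) (gau_pos y).le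
    _ = _ := by unfold gau; rw [← Real.exp_add]; congr 1; ring

lemma gau_fderiv (y : R2) : HasFDerivAt gau (gau y • ((-(1/2) : ℝ) • (2 • innerSL ℝ y))) y := by
  have h := (((hasStrictFDerivAt_norm_sq (F := R2) y).hasFDerivAt).const_mul (-(1/2) : ℝ)).exp
  exact h

lemma gau_fderiv_single (y : R2) (j : Fin 2) :
    fderiv ℝ gau y (EuclideanSpace.single j 1) = - (y j * gau y) := by
  rw [(gau_fderiv y).fderiv]
  simp [EuclideanSpace.inner_single_right]
  ring

lemma coord_int (j : Fin 2) (f : R2 → ℝ) (hf : Continuous f) (M : ℝ) (hM : ∀ x, |f x| ≤ M) :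
    Integrable (fun y => y j * gau y * f y) := by
  have hj : Continuous fun y : R2 => y j := by fun_prop
  refine ((gau_int_b (by norm_num : (0:ℝ) < 1/4)).mul_const M).mono'
    ((hj.mul gau_cont).mul hf).aestronglyMeasurable
    (Filter.Eventually.of_forall fun y => ?_)
  rw [Real.norm_eq_abs, abs_mul, abs_mul, abs_of_pos (gau_pos y)]
  exact mul_le_mul (gau_coord j y) (hM y) (abs_nonneg _) (Real.exp_pos _).le

lemma gau_mul_int (f : R2 → ℝ) (hf : Continuous f) (M : ℝ) (hM : ∀ x, |f x| ≤ M) :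
    Integrable (fun y => gau y * f y) := by
  refine (gau_int.mul_const M).mono' (gau_cont.mul hf).aestronglyMeasurable
    (Filter.Eventually.of_forall fun y => ?_)
  rw [Real.norm_eq_abs, abs_mul, abs_of_pos (gau_pos y)]
  exact mul_le_mul_of_nonneg_left (hM y) (gau_pos y).le

lemma ibp (j : Fin 2) (f : R2 → ℝ) (hf : ContDiff ℝ 1 f) (M : ℝ) (hM : ∀ x, |f x| ≤ M)
    (hM' : ∀ x, |pdR j f x| ≤ M) :
    ∫ y, y j * gau y * f y = ∫ y, gau y * pdR j f y := by
  have hc : Continuous (pdR j f) := by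
    unfold pdR
    exact (hf.continuous_fderiv (by norm_num)).clm_apply continuous_const
  have h := integral_mul_fderiv_eq_neg_fderiv_mul_of_integrable (μ := (volume : Measure R2))
    (f := gau) (g := f) (v := EuclideanSpace.single j 1) ?_ ?_ ?_ ?_ ?_
  · unfold pdR
    rw [h, ← integral_neg]
    refine integral_congr_ae (Filter.Eventually.of_forall fun y => ?_)
    simp only [gau_fderiv_single]; ring
  · simp only [gau_fderiv_single]
    refine (coord_int j f hf.continuous M hM).neg.congr (Filter.Eventually.of_forall fun y => ?_)
    simp
  · exact gau_mul_int _ hc M hM'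
  · exact gau_mul_int _ hf.continuous M hM
  · intro x _; exact (gau_fderiv x).differentiableAt
  · intro x _; exact hf.differentiable (by norm_num) x

lemma fderiv_coords (f : R2 → ℝ) (x y : R2) : fderiv ℝ f x y = y 0 * pdR 0 f x + y 1 * pdR 1 f x := by
  have : y = y 0 • EuclideanSpace.single 0 (1:ℝ) + y 1 • EuclideanSpace.single 1 (1:ℝ) := by
    ext i; fin_cases i <;> simp
  conv_lhs => rw [this]
  simp [pdR]

lemma mean_bound (w : R2 → ℝ) (hw : ContDiff ℝ 2 w) (M : ℝ)
    (hM0 : ∀ x, |w x| ≤ M) (hM1 : ∀ j x, |pdR j w x| ≤ M)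
    (hM2 : ∀ j x, |pdR j (pdR j w) x| ≤ M) (K : ℝ) (hK : ∀ x, -(2 * K) * w x ≤ lapR w x) (x : R2) :
    w x * (∫ y, gau y) ≤ Real.exp K * ∫ y, gau y * w (x + y) := by
  have hM : 0 ≤ M := (abs_nonneg _).trans (hM0 0)
  have hwc := hw.continuous
  have hd1 : ∀ j, ContDiff ℝ 1 (pdR j w) := fun j => by
    unfold pdR
    exact (hw.fderiv_right (m := 1) (by norm_num)).clm_apply contDiff_const
  have hd2 : ∀ j, Continuous (pdR j (pdR j w)) := fun j => by
    have := ((hd1 j).continuous_fderiv (by norm_num)).clm_apply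
      (continuous_const (y := (EuclideanSpace.single j 1 : R2)))
    exact this
  have hcs : ∀ s : ℝ, Continuous (fun y : R2 => x + s • y) := fun s => by fun_prop
  set F : ℝ → ℝ := fun s => ∫ y, gau y * w (x + s • y) with hF
  -- derivative under the integral
  have hder : ∀ s, HasDerivAt F (∫ y, gau y * fderiv ℝ w (x + s • y) y) s := by
    intro s
    refine (hasDerivAt_integral_of_dominated_loc_of_deriv_le (μ := (volume : Measure R2))
      (F := fun s y => gau y * w (x + s • y))
      (F' := fun s y => gau y * fderiv ℝ w (x + s • y) y)
      (bound := fun y => 2 * M * Real.exp (-(1/4) * ‖y‖ ^ 2)) (Filter.univ_mem) ?_ ?_ ?_ ?_ ?_ ?_).2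
    · exact Filter.Eventually.of_forall fun s =>
        (gau_cont.mul (hwc.comp (hcs s))).aestronglyMeasurable
    · exact gau_mul_int (fun y => w (x + s • y)) (hwc.comp (hcs s)) M (fun y => hM0 _)
    · refine (gau_cont.mul ?_).aestronglyMeasurable
      exact ((hw.continuous_fderiv (by norm_num)).comp (hcs s)).clm_apply continuous_id
    · refine Filter.Eventually.of_forall fun y t _ => ?_
      rw [fderiv_coords, Real.norm_eq_abs]
      have e : gau y * (y 0 * pdR 0 w (x + t • y) + y 1 * pdR 1 w (x + t • y)) =
        (y 0 * gau y) * pdR 0 w (x + t • y) + (y 1 * gau y) * pdR 1 w (x + t • y) := by ring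
      rw [e]
      have hb : ∀ j, |(y j * gau y) * pdR j w (x + t • y)| ≤ Real.exp (-(1/4) * ‖y‖ ^ 2) * M := by
        intro j
        rw [abs_mul, abs_mul, abs_of_pos (gau_pos y)]
        exact mul_le_mul (gau_coord j y) (hM1 j _) (abs_nonneg _) (Real.exp_pos _).le
      refine (abs_add_le _ _).trans ?_
      linarith [hb 0, hb 1]
    · exact (gau_int_b (by norm_num : (0:ℝ) < 1/4)).const_mul _
    · refine Filter.Eventually.of_forall fun y t _ => ?_
      have h1 : HasDerivAt (fun t : ℝ => x + t • y) y t := by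
        simpa using ((hasDerivAt_id t).smul_const y).const_add x
      have h2 := (hw.differentiable (by norm_num) (x + t • y)).hasFDerivAt
      exact (h2.comp_hasDerivAt t h1).const_mul _
  have hF' : ∀ s, ∫ y, gau y * fderiv ℝ w (x + s • y) y = s * ∫ y, gau y * lapR w (x + s • y) := by
    intro s
    have hpd : ∀ j y, pdR j (fun y => pdR j w (x + s • y)) y = s * pdR j (pdR j w) (x + s • y) := by
      intro j y
      have h1 : HasFDerivAt (fun y : R2 => x + s • y) (s • ContinuousLinearMap.id ℝ R2) y :=
        ((hasFDerivAt_id y).const_smul s).const_add x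
      have h2 := ((hd1 j).differentiable (by norm_num) (x + s • y)).hasFDerivAt
      have h3 := (h2.comp y h1).fderiv
      have h4 : fderiv ℝ (fun y => pdR j w (x + s • y)) y = _ := h3
      unfold pdR at h4 ⊢
      rw [h4]
      simp
    have hb : ∀ j, ∫ y, y j * gau y * pdR j w (x + s • y)
        = s * ∫ y, gau y * pdR j (pdR j w) (x + s • y) := by
      intro j
      have hcd : ContDiff ℝ 1 (fun y : R2 => pdR j w (x + s • y)) :=
        (hd1 j).comp (by fun_prop)
      rw [ibp j (fun y => pdR j w (x + s • y)) hcd (max M (|s| * M))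
        (fun y => (hM1 j _).trans (le_max_left _ _)) (fun y => ?_), ← integral_const_mul]
      · refine integral_congr_ae (Filter.Eventually.of_forall fun y => ?_)
        simp only [hpd]; ring
      · rw [hpd, abs_mul]
        exact (mul_le_mul_of_nonneg_left (hM2 j _) (abs_nonneg _)).trans (le_max_right _ _)
    have e1 : ∀ y, gau y * fderiv ℝ w (x + s • y) y =
        y 0 * gau y * pdR 0 w (x + s • y) + y 1 * gau y * pdR 1 w (x + s • y) := by
      intro y; rw [fderiv_coords]; ring
    have e2 : ∀ y, gau y * lapR w (x + s • y) =
        gau y * pdR 0 (pdR 0 w) (x + s • y) + gau y * pdR 1 (pdR 1 w) (x + s • y) := by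
      intro y; unfold lapR; ring
    simp_rw [e1, e2]
    have i1 : ∀ j, Integrable (fun y => y j * gau y * pdR j w (x + s • y)) := fun j =>
      coord_int j (fun y => pdR j w (x + s • y)) ((hd1 j).continuous.comp (hcs s)) M
        (fun y => hM1 j _)
    have i2 : ∀ j, Integrable (fun y => gau y * pdR j (pdR j w) (x + s • y)) := fun j =>
      gau_mul_int (fun y => pdR j (pdR j w) (x + s • y)) ((hd2 j).comp (hcs s)) M
        (fun y => hM2 j _)
    rw [integral_add (i1 0) (i1 1), integral_add (i2 0) (i2 1), hb, hb]
    ring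
  have hge : ∀ s, 0 ≤ s → -(2 * K) * s * F s ≤ ∫ y, gau y * fderiv ℝ w (x + s • y) y := by
    intro s hs
    rw [hF']
    have : -(2 * K) * F s ≤ ∫ y, gau y * lapR w (x + s • y) := by
      rw [hF, ← integral_const_mul]
      refine integral_mono
        ((gau_mul_int (fun y => w (x + s • y)) (hwc.comp (hcs s)) M (fun y => hM0 _)).const_mul _)
        (gau_mul_int (fun y => lapR w (x + s • y))
          (((hd2 0).add (hd2 1)).comp (hcs s)) (M + M)
          (fun y => (abs_add_le _ _).trans (add_le_add (hM2 0 _) (hM2 1 _)))) (fun y => ?_)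
      have := mul_le_mul_of_nonneg_left (hK (x + s • y)) (gau_pos y).le
      simp only
      linarith
    nlinarith
  have hG : ∀ s, HasDerivAt (fun s => Real.exp (K * s ^ 2) * F s)
      (Real.exp (K * s ^ 2) * (K * (2 * s)) * F s + Real.exp (K * s ^ 2) *
        ∫ y, gau y * fderiv ℝ w (x + s • y) y) s := by
    intro s
    have h1 : HasDerivAt (fun s : ℝ => K * s ^ 2) (K * (2 * s)) s := by
      simpa using (hasDerivAt_pow 2 s).const_mul K
    exact h1.exp.mul (hder s)
  have hmono : MonotoneOn (fun s => Real.exp (K * s ^ 2) * F s) (Set.Icc 0 1) := by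
    refine monotoneOn_of_deriv_nonneg (convex_Icc 0 1)
      (fun s _ => (hG s).continuousAt.continuousWithinAt)
      (fun s _ => (hG s).differentiableAt.differentiableWithinAt) (fun s hs => ?_)
    rw [interior_Icc] at hs
    rw [(hG s).deriv]
    have := mul_le_mul_of_nonneg_left (hge s hs.1.le) (Real.exp_pos (K * s ^ 2)).le
    linarith
  have := hmono (Set.left_mem_Icc.2 zero_le_one) (Set.right_mem_Icc.2 zero_le_one) zero_le_one
  simpa [hF, integral_const_mul, integral_mul_const, mul_comm] using this

/-- Real inner product of two complex-valued functions. -/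
def dotC (f g : R2 → ℂ) (x : R2) : ℝ := (f x).re * (g x).re + (f x).im * (g x).im

lemma pdR_dotC (j : Fin 2) (f g : R2 → ℂ) (x : R2) (hf : DifferentiableAt ℝ f x)
    (hg : DifferentiableAt ℝ g x) :
    pdR j (dotC f g) x = dotC (pdC j f) g x + dotC f (pdC j g) x := by
  have fr := Complex.reCLM.hasFDerivAt.comp x hf.hasFDerivAt
  have fi := Complex.imCLM.hasFDerivAt.comp x hf.hasFDerivAt
  have gr := Complex.reCLM.hasFDerivAt.comp x hg.hasFDerivAt
  have gi := Complex.imCLM.hasFDerivAt.comp x hg.hasFDerivAt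
  have h : HasFDerivAt (dotC f g) _ x := (fr.mul gr).add (fi.mul gi)
  unfold pdR
  rw [h.fderiv]
  simp [dotC, pdC]
  ring

lemma pdC_comb (j : Fin 2) (c : ℂ) (f g : R2 → ℂ) (a : R2 → ℝ) (x : R2)
    (hf : DifferentiableAt ℝ f x) (hg : DifferentiableAt ℝ g x) (ha : DifferentiableAt ℝ a x) :
    pdC j (fun x => c * f x + (a x : ℂ) * g x) x =
      c * pdC j f x + ((pdR j a x : ℂ) * g x + (a x : ℂ) * pdC j g x) := by
  have ha' := Complex.ofRealCLM.hasFDerivAt.comp x ha.hasFDerivAt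
  have h : HasFDerivAt (fun x => c * f x + (a x : ℂ) * g x) _ x :=
    (hf.hasFDerivAt.const_mul c).add (ha'.mul hg.hasFDerivAt)
  unfold pdC pdR
  rw [h.fderiv]
  simp
  ring

lemma pdC_schwartz (j : Fin 2) (u : SchwartzMap R2 ℂ) :
    ∃ v : SchwartzMap R2 ℂ, (⇑v : R2 → ℂ) = pdC j u := by
  refine ⟨LineDeriv.lineDerivOp (EuclideanSpace.single j 1 : R2) u, ?_⟩
  ext x
  exact SchwartzMap.lineDerivOp_apply_eq_fderiv _ _ _

lemma dotC_bdd (u v : SchwartzMap R2 ℂ) : ∃ M, ∀ x, |dotC u v x| ≤ M := by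
  refine ⟨2 * (SchwartzMap.seminorm ℝ 0 0 u * SchwartzMap.seminorm ℝ 0 0 v), fun x => ?_⟩
  have hu := SchwartzMap.norm_le_seminorm ℝ u x
  have hv := SchwartzMap.norm_le_seminorm ℝ v x
  have h1 : |(u x).re * (v x).re| ≤ SchwartzMap.seminorm ℝ 0 0 u * SchwartzMap.seminorm ℝ 0 0 v := by
    rw [abs_mul]
    exact mul_le_mul ((Complex.abs_re_le_norm _).trans hu) ((Complex.abs_re_le_norm _).trans hv)
      (abs_nonneg _) ((norm_nonneg _).trans hu)
  have h2 : |(u x).im * (v x).im| ≤ SchwartzMap.seminorm ℝ 0 0 u * SchwartzMap.seminorm ℝ 0 0 v := by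
    rw [abs_mul]
    exact mul_le_mul ((Complex.abs_im_le_norm _).trans hu) ((Complex.abs_im_le_norm _).trans hv)
      (abs_nonneg _) ((norm_nonneg _).trans hu)
  exact (abs_add_le _ _).trans (by linarith)

lemma sch_diff (u : SchwartzMap R2 ℂ) : Differentiable ℝ (u : R2 → ℂ) := u.differentiable

lemma dotC_contDiff (u v : SchwartzMap R2 ℂ) : ContDiff ℝ 2 (dotC u v) := by
  have hu : ContDiff ℝ 2 (u : R2 → ℂ) := u.smooth 2
  have hv : ContDiff ℝ 2 (v : R2 → ℂ) := v.smooth 2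
  have h1 := Complex.reCLM.contDiff.comp hu
  have h2 := Complex.imCLM.contDiff.comp hu
  have h3 := Complex.reCLM.contDiff.comp hv
  have h4 := Complex.imCLM.contDiff.comp hv
  exact (h1.mul h3).add (h2.mul h4)

lemma pdR_w (j : Fin 2) (u : SchwartzMap R2 ℂ) :
    pdR j (dotC u u) = fun x => 2 * dotC u (pdC j u) x := by
  ext x
  rw [pdR_dotC j u u x (sch_diff u x) (sch_diff u x)]
  unfold dotC; ring

lemma pdR2_w (j : Fin 2) (u : SchwartzMap R2 ℂ) (x : R2) :
    pdR j (pdR j (dotC u u)) x =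
      2 * (dotC (pdC j u) (pdC j u) x + dotC u (pdC j (pdC j u)) x) := by
  obtain ⟨v, hv⟩ := pdC_schwartz j u
  have e : pdR j (dotC u u) = fun x => dotC u v x + dotC u v x := by
    rw [pdR_w, hv]; ext x; ring
  have hd : HasFDerivAt (dotC u v) (fderiv ℝ (dotC u v) x) x :=
    ((dotC_contDiff u v).differentiable (by norm_num) x).hasFDerivAt
  have h := pdR_dotC j u v x (sch_diff u x) (sch_diff v x)
  rw [← hv] at h
  rw [e, ← hv, ← h]
  unfold pdR
  have h5 : HasFDerivAt (fun x => dotC u v x + dotC u v x) _ x := hd.add hd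
  rw [h5.fderiv]
  simp
  ring

lemma opAA (φ : R2 → ℝ) (hφ : ContDiff ℝ (⊤ : ℕ∞) φ) (u : SchwartzMap R2 ℂ) (x : R2) :
    ∃ t : ℝ, opA φ (opA φ u) x = -(1/4) * pdC 0 (pdC 0 u) x - I / 2 * t * u x
      - I * ((-(pdR 1 φ x) / 2 : ℝ) : ℂ) * pdC 0 u x + ((-(pdR 1 φ x) / 2 : ℝ) : ℂ) ^ 2 * u x := by
  obtain ⟨v, hv⟩ := pdC_schwartz 0 u
  have e : opA φ u = fun x => (-I / 2) * v x + ((-(pdR 1 φ x) / 2 : ℝ) : ℂ) * u x := by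
    ext x; rw [hv]; unfold opA Dop; push_cast; ring
  have ha : Differentiable ℝ (fun x => -(pdR 1 φ x) / 2) := by
    have : ContDiff ℝ 1 (pdR 1 φ) := by
      unfold pdR
      exact (hφ.fderiv_right (m := 1) (by norm_cast)).clm_apply contDiff_const
    have h1 : Differentiable ℝ (pdR 1 φ) := this.differentiable (by norm_num)
    fun_prop
  refine ⟨pdR 0 (fun x => -(pdR 1 φ x) / 2) x, ?_⟩
  have e2 := pdC_comb 0 (-I / 2) v u (fun x => -(pdR 1 φ x) / 2) x (sch_diff v x) (sch_diff u x) (ha x)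
  have e3 : opA φ (opA φ u) x = -I * pdC 0 (opA φ u) x / 2 - ((pdR 1 φ x / 2 : ℝ) : ℂ) * opA φ u x := rfl
  rw [e3, e, e2, hv]
  push_cast
  linear_combination (1/4) * pdC 0 (pdC 0 u) x * Complex.I_sq

lemma opBB (φ : R2 → ℝ) (hφ : ContDiff ℝ (⊤ : ℕ∞) φ) (u : SchwartzMap R2 ℂ) (x : R2) :
    ∃ t : ℝ, opB φ (opB φ u) x = -(1/4) * pdC 1 (pdC 1 u) x - I / 2 * t * u x
      - I * (((pdR 0 φ x) / 2 : ℝ) : ℂ) * pdC 1 u x + (((pdR 0 φ x) / 2 : ℝ) : ℂ) ^ 2 * u x := by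
  obtain ⟨v, hv⟩ := pdC_schwartz 1 u
  have e : opB φ u = fun x => (-I / 2) * v x + (((pdR 0 φ x) / 2 : ℝ) : ℂ) * u x := by
    ext x; rw [hv]; unfold opB Dop; push_cast; ring
  have ha : Differentiable ℝ (fun x => (pdR 0 φ x) / 2) := by
    have : ContDiff ℝ 1 (pdR 0 φ) := by
      unfold pdR
      exact (hφ.fderiv_right (m := 1) (by norm_cast)).clm_apply contDiff_const
    have h1 : Differentiable ℝ (pdR 0 φ) := this.differentiable (by norm_num)
    fun_prop
  refine ⟨pdR 1 (fun x => (pdR 0 φ x) / 2) x, ?_⟩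
  have e2 := pdC_comb 1 (-I / 2) v u (fun x => (pdR 0 φ x) / 2) x (sch_diff v x) (sch_diff u x) (ha x)
  have e3 : opB φ (opB φ u) x = -I * pdC 1 (opB φ u) x / 2 + ((pdR 0 φ x / 2 : ℝ) : ℂ) * opB φ u x := rfl
  rw [e3, e, e2, hv]
  push_cast
  linear_combination (1/4) * pdC 1 (pdC 1 u) x * Complex.I_sq

lemma lap_w (φ : R2 → ℝ) (hφ : ContDiff ℝ (⊤ : ℕ∞) φ) (u : SchwartzMap R2 ℂ) (l : ℝ) (x : R2)
    (h : opH φ u x = (l : ℂ) ^ 2 * u x) :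
    -(8 * l ^ 2 + 2 * lapR φ x) * dotC u u x ≤ lapR (dotC u u) x := by
  obtain ⟨t, ht⟩ := opAA φ hφ u x
  obtain ⟨t', ht'⟩ := opBB φ hφ u x
  unfold opH at h
  rw [ht, ht'] at h
  have hL : lapR (dotC u u) x = pdR 0 (pdR 0 (dotC u u)) x + pdR 1 (pdR 1 (dotC u u)) x := rfl
  rw [hL, pdR2_w, pdR2_w]
  generalize -(pdR 1 φ x) / 2 = a at h
  generalize (pdR 0 φ x) / 2 = b at h
  generalize lapR φ x = L at h ⊢
  unfold dotC
  generalize pdC 0 (pdC 0 u) x = u00 at h ⊢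
  generalize pdC 1 (pdC 1 u) x = u11 at h ⊢
  generalize pdC 0 u x = u0 at h ⊢
  generalize pdC 1 u x = u1 at h ⊢
  generalize u x = z at h ⊢
  have hr := congrArg Complex.re h
  have hi := congrArg Complex.im h
  simp [pow_two] at hr hi
  have key := congrArg₂ (fun r s => z.re * r + z.im * s) hr hi
  nlinarith [key, sq_nonneg (u0.re - 2 * a * z.im), sq_nonneg (u0.im + 2 * a * z.re),
    sq_nonneg (u1.re - 2 * b * z.im), sq_nonneg (u1.im + 2 * b * z.re)]

lemma pdR2_bd (φ : R2 → ℝ) (hφ : ContDiff ℝ (⊤ : ℕ∞) φ) (C : ℝ)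
    (hC : ∀ x : R2, ‖iteratedFDeriv ℝ 2 φ x‖ ≤ C) (j : Fin 2) (x : R2) :
    |pdR j (pdR j φ) x| ≤ C := by
  have hd : DifferentiableAt ℝ (fderiv ℝ φ) x :=
    (hφ.fderiv_right (m := 1) (by norm_cast)).differentiable (by norm_num) x
  have e : pdR j (pdR j φ) x = iteratedFDeriv ℝ 2 φ x
      ![EuclideanSpace.single j 1, EuclideanSpace.single j 1] := by
    rw [iteratedFDeriv_two_apply]
    unfold pdR
    rw [fderiv_clm_apply hd (differentiableAt_const _)]
    simp
  rw [e, ← Real.norm_eq_abs]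
  refine ((iteratedFDeriv ℝ 2 φ x).le_opNorm _).trans ?_
  simpa [Fin.prod_univ_two] using hC x

lemma point_bd (K : ℝ) (u : SchwartzMap R2 ℂ)
    (hK : ∀ x, -(2 * K) * dotC u u x ≤ lapR (dotC u u) x) (x : R2) :
    ‖u x‖ ^ 2 * (∫ y, gau y) ≤ Real.exp K * ∫ y, ‖u y‖ ^ 2 := by
  have hw : ∀ x, dotC u u x = ‖u x‖ ^ 2 := fun x => by
    rw [Complex.sq_norm, Complex.normSq_apply]; rfl
  have hb1 : ∀ j, ∃ M, ∀ x, |pdR j (dotC u u) x| ≤ M := fun j => by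
    obtain ⟨v, hv⟩ := pdC_schwartz j u
    obtain ⟨M, hM⟩ := dotC_bdd u v
    refine ⟨2 * M, fun x => ?_⟩
    rw [pdR_w, ← hv, abs_mul, abs_two]
    linarith [hM x]
  have hb2 : ∀ j, ∃ M, ∀ x, |pdR j (pdR j (dotC u u)) x| ≤ M := fun j => by
    obtain ⟨v, hv⟩ := pdC_schwartz j u
    obtain ⟨v', hv'⟩ := pdC_schwartz j v
    obtain ⟨M, hM⟩ := dotC_bdd v v
    obtain ⟨M', hM'⟩ := dotC_bdd u v'
    refine ⟨2 * (M + M'), fun x => ?_⟩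
    rw [pdR2_w, ← hv, ← hv', abs_mul, abs_two]
    linarith [hM x, hM' x, abs_add_le (dotC v v x) (dotC u v' x)]
  obtain ⟨M0, hM0⟩ := dotC_bdd u u
  choose M1 hM1 using hb1
  choose M2 hM2 using hb2
  set M := M0 ⊔ (M1 0 ⊔ M1 1) ⊔ (M2 0 ⊔ M2 1) with hM
  have h := mean_bound (dotC u u) (dotC_contDiff u u) M
    (fun x => (hM0 x).trans (by simp [hM]))
    (fun j x => (hM1 j x).trans (by fin_cases j <;> simp [hM]))
    (fun j x => (hM2 j x).trans (by fin_cases j <;> simp [hM])) K hK x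
  rw [hw] at h
  refine h.trans (mul_le_mul_of_nonneg_left ?_ (Real.exp_pos K).le)
  have hint : Integrable (fun y => ‖u y‖ ^ 2) := (u.memLp 2).integrable_norm_pow (by norm_num)
  rw [← integral_add_left_eq_self (fun y => ‖u y‖ ^ 2) x]
  simp_rw [hw]
  refine integral_mono_of_nonneg (Filter.Eventually.of_forall fun y => ?_)
    (hint.comp_add_left x) (Filter.Eventually.of_forall fun y => ?_)
  · exact mul_nonneg (gau_pos y).le (by positivity)
  · exact mul_le_of_le_one_left (by positivity) (gau_le_one y)

/-- Small-eigenvalue case: for `λ ∈ [0,Λ]`, eigenfunctions `Hu = λ²u` satisfy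
`‖u‖_{L^∞} ≤ C ‖u‖_{L²}`. -/
theorem stmt16 (φ : R2 → ℝ) (hφ_smooth : ContDiff ℝ (⊤ : ℕ∞) φ)
    (hφ_bd : ∀ n : ℕ, 2 ≤ n → ∃ C : ℝ, ∀ x : R2, ‖iteratedFDeriv ℝ n φ x‖ ≤ C) :
    ∀ Λ : ℝ, 0 < Λ → ∃ C > 0, ∀ l ∈ Set.Icc (0 : ℝ) Λ, ∀ u : SchwartzMap R2 ℂ,
      (∀ x : R2, opH φ (⇑u) x = ((l : ℂ)) ^ 2 * u x) →
      eLpNorm (⇑u) ⊤ volume ≤ ENNReal.ofReal C * eLpNorm (⇑u) 2 volume := by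
  intro Λ hΛ
  obtain ⟨C2, hC2⟩ := hφ_bd 2 le_rfl
  have hg : 0 < ∫ y, gau y := by
    rw [integral_pos_iff_support_of_nonneg (fun y => (gau_pos y).le) gau_int]
    have : Function.support gau = Set.univ := by
      ext y; simp [(gau_pos y).ne']
    rw [this]
    simp
  set K : ℝ := 4 * Λ ^ 2 + 2 * C2 with hKdef
  have hpos : 0 < Real.exp K / ∫ y, gau y := div_pos (Real.exp_pos K) hg
  refine ⟨Real.sqrt (Real.exp K / ∫ y, gau y), Real.sqrt_pos.2 hpos, ?_⟩
  intro l hl u hu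
  have hK : ∀ x, -(2 * K) * dotC u u x ≤ lapR (dotC u u) x := by
    intro x
    refine le_trans ?_ (lap_w φ hφ_smooth u l x (hu x))
    have h0 : 0 ≤ dotC u u x := add_nonneg (mul_self_nonneg _) (mul_self_nonneg _)
    have h1 := abs_le.1 (pdR2_bd φ hφ_smooth C2 hC2 0 x)
    have h2 := abs_le.1 (pdR2_bd φ hφ_smooth C2 hC2 1 x)
    have h3 : l ^ 2 ≤ Λ ^ 2 := pow_le_pow_left₀ hl.1 hl.2 2
    refine mul_le_mul_of_nonneg_right ?_ h0
    unfold lapR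
    rw [hKdef]
    linarith [h1.2, h2.2]
  have hfin : ∀ x, ‖u x‖ ≤ Real.sqrt (Real.exp K / ∫ y, gau y) * Real.sqrt (∫ y, ‖u y‖ ^ 2) := by
    intro x
    rw [← Real.sqrt_mul hpos.le]
    refine Real.le_sqrt_of_sq_le ?_
    rw [div_mul_eq_mul_div, le_div_iff₀ hg]
    exact point_bd K u hK x
  rw [eLpNorm_exponent_top]
  refine (eLpNormEssSup_le_of_ae_bound (Filter.Eventually.of_forall hfin)).trans ?_
  rw [ENNReal.ofReal_mul (Real.sqrt_nonneg _),
    MemLp.eLpNorm_eq_integral_rpow_norm two_ne_zero ENNReal.ofNat_ne_top (u.memLp 2 volume)]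
  simp [Real.sqrt_eq_rpow]
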